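/- (Convolution property, Theorem 4.1, Fourier form.) For every integer n ≥ 3 and every real μ > 1: for every integer m ≥ 1 and every ω ∈ ℝ, Φ^{(n,m)}(ω) = B̂^{(0,m)}(ω) · Φ^{(n-1,m)}(ω); and for every ω ∈ ℝ, Φ^{(n,0)}(ω) = B̂^{(0,1)}(ω) · Φ^{(n-1,0)}(ω). Equivalently, the refinable ripplet φ^{(n,m)} is the convolution of the characteristic-function B-spline B^{(0,m)} (respectively B^{(0,1)} when m = 0) with φ^{(n-1,m)}. -/

import Mathlib

open MeasureTheory Filter Complex

/-- Binomial coefficient `binom p q` extended to integer `q`, zero outside `0 ≤ q ≤ p`. -/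
noncomputable def binomZ (p : ℕ) (q : ℤ) : ℝ :=
  if 0 ≤ q then (p.choose q.toNat : ℝ) else 0

/-- The nonstationary mask `a^{(n,m)}_α` with tension parameter `μ`. -/
noncomputable def maskNS (n m : ℕ) (μ : ℝ) (α : ℤ) : ℝ :=
  if m = 0 then (if α = 0 ∨ α = 1 then 1/2 else 0)
  else if 0 ≤ α ∧ α ≤ (n : ℤ) + 1 then
    (2 : ℝ) ^ (-((n : ℝ) + 1 + (m : ℝ) ^ (-μ))) *
      (binomZ (n+1) α + 4 * ((2 : ℝ) ^ ((m : ℝ) ^ (-μ)) - 1) * binomZ (n-1) (α-1))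
  else 0

/-- The symbol `A^{(n,m)}(z) = Σ_{α=0}^{n+1} a^{(n,m)}_α z^α`. -/
noncomputable def symbolNS (n m : ℕ) (μ : ℝ) (z : ℂ) : ℂ :=
  ∑ α ∈ Finset.range (n+2), (maskNS n m μ (α : ℤ) : ℂ) * z ^ α

/-- Partial product `∏_{k=m}^{N-1} A^{(n,k)}(e^{-iω/2^{k+1}})` of the infinite product
defining the Fourier transform `Φ^{(n,m)}` of the refinable ripplet `φ^{(n,m)}`. -/
noncomputable def partialProdNS (n m : ℕ) (μ : ℝ) (ω : ℝ) (N : ℕ) : ℂ :=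
  ∏ k ∈ Finset.Ico m N, symbolNS n k μ (Complex.exp (-(Complex.I * ω) / 2 ^ (k + 1)))

/-- Fourier transform of the `2^m`-dilated cardinal B-spline of degree `d`. -/
noncomputable def BsplineFT (d m : ℕ) (ω : ℝ) : ℂ :=
  if ω = 0 then 1
  else ((1 - Complex.exp (-(Complex.I * ω) * 2 ^ (-(m : ℤ)))) /
      (Complex.I * ω * 2 ^ (-(m : ℤ)))) ^ (d + 1)

/-! For `k ≥ 1` the symbols satisfy `A^{(n+1,k)}(z) = (1 + z) / 2 * A^{(n,k)}(z)`, while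
`A^{(n,0)}` does not depend on `n`. Passing from `n` to `n + 1` therefore multiplies the product
defining the Fourier transform by `∏_{k ≥ max m 1} (1 + exp (s / 2 ^ (k + 1))) / 2` with `s = -iω`.
With `q s = (exp s - 1) / s`, extended by `q 0 = 1`, the identity
`q s = (1 + exp (s / 2)) / 2 * q (s / 2)` telescopes this product, and continuity of `q` at `0`
gives the limit `q (s / 2 ^ max m 1)`, which is the transform of the B-spline of degree `0`.
The function `q` is `dslope exp 0`. -/

theorem binomZ_natCast (p q : ℕ) : binomZ p q = p.choose q := by simp [binomZ]

theorem sum_range_binomZ_mul_pow {p N : ℕ} (hN : p < N) (z : ℂ) :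
    ∑ α ∈ Finset.range N, (binomZ p α : ℂ) * z ^ α = (1 + z) ^ p := by
  have hvanish : ∀ α ∈ Finset.range N, α ∉ Finset.range (p + 1) →
      z ^ α * (p.choose α : ℂ) = 0 := fun α _ hα ↦ by
    rw [Nat.choose_eq_zero_of_lt (by simpa using hα), Nat.cast_zero, mul_zero]
  simp only [binomZ_natCast, ofReal_natCast, mul_comm _ (z ^ _)]
  rw [← Finset.sum_subset (Finset.range_subset_range.2 hN) hvanish, add_comm 1 z, add_pow]
  simp only [one_pow, mul_one]

theorem sum_range_binomZ_sub_one_mul_pow {p N : ℕ} (hN : p + 1 < N) (z : ℂ) :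
    ∑ α ∈ Finset.range N, (binomZ p ((α : ℤ) - 1) : ℂ) * z ^ α = z * (1 + z) ^ p := by
  obtain ⟨M, rfl⟩ : ∃ M, N = M + 1 := ⟨N - 1, by omega⟩
  have hzero : binomZ p (((0 : ℕ) : ℤ) - 1) = 0 := by simp [binomZ]
  rw [Finset.sum_range_succ', hzero, ← sum_range_binomZ_mul_pow (by omega : p < M), Finset.mul_sum]
  simp only [Nat.cast_add_one, add_sub_cancel_right, ofReal_zero, zero_mul, add_zero, pow_succ']
  exact Finset.sum_congr rfl fun α _ ↦ mul_left_comm _ _ _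

theorem symbolNS_zero (n : ℕ) (μ : ℝ) (z : ℂ) : symbolNS n 0 μ z = (1 + z) / 2 := by
  have hzero : maskNS n 0 μ ((0 : ℕ) : ℤ) = 1 / 2 := by simp [maskNS]
  have hone : maskNS n 0 μ ((0 + 1 : ℕ) : ℤ) = 1 / 2 := by simp [maskNS]
  have htail (k : ℕ) : maskNS n 0 μ ((k + 1 + 1 : ℕ) : ℤ) = 0 := by
    rw [maskNS, if_pos rfl, if_neg (by omega)]
  rw [symbolNS, Finset.sum_range_succ', Finset.sum_range_succ', hzero, hone]
  simp only [htail, ofReal_zero, zero_mul, Finset.sum_const_zero]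
  push_cast
  ring

theorem symbolNS_eq {n k : ℕ} (hn : 1 ≤ n) (hk : k ≠ 0) (μ : ℝ) (z : ℂ) :
    symbolNS n k μ z = ((2 : ℝ) ^ (-((n : ℝ) + 1 + (k : ℝ) ^ (-μ))) : ℝ) *
      ((1 + z) ^ (n + 1) +
        4 * (((2 : ℝ) ^ ((k : ℝ) ^ (-μ)) - 1 : ℝ) : ℂ) * (z * (1 + z) ^ (n - 1))) := by
  rw [← sum_range_binomZ_mul_pow (Nat.lt_succ_self (n + 1)),
    ← sum_range_binomZ_sub_one_mul_pow (by omega : n - 1 + 1 < n + 2), symbolNS, Finset.mul_sum,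
    ← Finset.sum_add_distrib, Finset.mul_sum]
  refine Finset.sum_congr rfl fun α hα ↦ ?_
  have hα' : (0 : ℤ) ≤ α ∧ (α : ℤ) ≤ (n : ℤ) + 1 := by
    have := Finset.mem_range.1 hα
    omega
  rw [maskNS, if_neg hk, if_pos hα']
  push_cast
  ring

theorem symbolNS_succ {n k : ℕ} (hn : 1 ≤ n) (hk : k ≠ 0) (μ : ℝ) (z : ℂ) :
    symbolNS (n + 1) k μ z = (1 + z) / 2 * symbolNS n k μ z := by
  have hscale : (2 : ℝ) ^ (-(((n + 1 : ℕ) : ℝ) + 1 + (k : ℝ) ^ (-μ))) =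
      (2 : ℝ) ^ (-((n : ℝ) + 1 + (k : ℝ) ^ (-μ))) / 2 := by
    rw [← Real.rpow_sub_one two_ne_zero]
    push_cast
    ring_nf
  have hpow : (1 + z) ^ n = (1 + z) * (1 + z) ^ (n - 1) := (mul_pow_sub_one (by omega) _).symm
  rw [symbolNS_eq (by omega) hk, symbolNS_eq hn hk, hscale, Nat.add_sub_cancel, hpow, ofReal_div,
    ofReal_ofNat]
  ring

theorem dslope_exp_zero_of_ne {s : ℂ} (hs : s ≠ 0) : dslope exp 0 s = (exp s - 1) / s := by
  rw [dslope_of_ne _ hs, slope_def_field, exp_zero, sub_zero]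

theorem dslope_exp_zero_zero : dslope exp (0 : ℂ) 0 = 1 := by
  rw [dslope_same, Complex.deriv_exp, exp_zero]

theorem dslope_exp_zero_eq_half_mul (s : ℂ) :
    dslope exp 0 s = (1 + exp (s / 2)) / 2 * dslope exp 0 (s / 2) := by
  rcases eq_or_ne s 0 with rfl | hs
  · norm_num [dslope_exp_zero_zero]
  · have hsq : exp s = exp (s / 2) ^ 2 := by rw [sq, ← exp_add, add_halves]
    rw [dslope_exp_zero_of_ne hs, dslope_exp_zero_of_ne (div_ne_zero hs two_ne_zero), hsq]
    field_simp
    ring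

theorem prod_Ico_mul_dslope_exp_zero {m N : ℕ} (hmN : m ≤ N) (s : ℂ) :
    (∏ k ∈ Finset.Ico m N, (1 + exp (s / 2 ^ (k + 1))) / 2) * dslope exp 0 (s / 2 ^ N) =
      dslope exp 0 (s / 2 ^ m) := by
  induction N, hmN using Nat.le_induction with
  | base => rw [Finset.Ico_self, Finset.prod_empty, one_mul]
  | succ N hN ih =>
    rw [Finset.prod_Ico_succ_top hN, mul_assoc, ← ih, dslope_exp_zero_eq_half_mul (s / 2 ^ N),
      div_div, ← pow_succ]

theorem tendsto_dslope_exp_zero_div_two_pow (s : ℂ) :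
    Tendsto (fun N : ℕ ↦ dslope exp 0 (s / 2 ^ N)) atTop (nhds 1) := by
  have hcont : ContinuousAt (dslope exp (0 : ℂ)) 0 :=
    continuousAt_dslope_same.2 Complex.differentiableAt_exp
  have hzero : Tendsto (fun N : ℕ ↦ s / 2 ^ N) atTop (nhds 0) := by
    simpa only [div_eq_mul_inv, inv_pow, mul_zero] using
      (tendsto_pow_atTop_nhds_zero_of_norm_lt_one
        (by norm_num : ‖(2⁻¹ : ℂ)‖ < 1)).const_mul s
  exact dslope_exp_zero_zero ▸ hcont.tendsto.comp hzero

theorem tendsto_prod_Ico_one_add_exp_div_two (m : ℕ) (s : ℂ) :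
    Tendsto (fun N ↦ ∏ k ∈ Finset.Ico m N, (1 + exp (s / 2 ^ (k + 1))) / 2) atTop
      (nhds (dslope exp 0 (s / 2 ^ m))) := by
  have hlim := tendsto_dslope_exp_zero_div_two_pow s
  have hquot := (tendsto_const_nhds (x := dslope exp 0 (s / 2 ^ m))).div hlim one_ne_zero
  rw [div_one] at hquot
  refine hquot.congr' ?_
  filter_upwards [hlim.eventually_ne one_ne_zero, eventually_ge_atTop m] with N hne hmN
  exact (eq_div_of_mul_eq hne (prod_Ico_mul_dslope_exp_zero hmN s)).symm

theorem bsplineFT_eq_dslope_exp_pow (d m : ℕ) (ω : ℝ) :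
    BsplineFT d m ω = dslope exp 0 (-(I * ω) / 2 ^ m) ^ (d + 1) := by
  rcases eq_or_ne ω 0 with rfl | hω
  · rw [BsplineFT, if_pos rfl, ofReal_zero, mul_zero, neg_zero, zero_div, dslope_exp_zero_zero,
      one_pow]
  · have hs : -(I * ω) / 2 ^ m ≠ 0 := by simp [hω]
    rw [BsplineFT, if_neg hω, dslope_exp_zero_of_ne hs, zpow_neg, zpow_natCast, ← div_eq_mul_inv,
      ← div_eq_mul_inv, ← neg_sub (exp _) 1, neg_div (2 ^ m), div_neg, neg_div]

theorem partialProdNS_succ {n : ℕ} (hn : 1 ≤ n) (m : ℕ) (μ ω : ℝ) (N : ℕ) :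
    partialProdNS (n + 1) m μ ω N =
      (∏ k ∈ Finset.Ico (max m 1) N, (1 + exp (-(I * ω) / 2 ^ (k + 1))) / 2) *
        partialProdNS n m μ ω N := by
  rw [← Finset.Ico_filter_le, Finset.prod_filter, partialProdNS, partialProdNS,
    ← Finset.prod_mul_distrib]
  refine Finset.prod_congr rfl fun k _ ↦ ?_
  rcases eq_or_ne k 0 with rfl | hk
  · rw [symbolNS_zero, symbolNS_zero, if_neg (by decide), one_mul]
  · rw [if_pos (Nat.one_le_iff_ne_zero.2 hk), symbolNS_succ hn hk]

theorem convolution_property_general {n : ℕ} (hn : 1 ≤ n) {m : ℕ} {μ ω : ℝ} {L : ℂ}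
    (hL : Tendsto (partialProdNS n m μ ω) atTop (nhds L)) :
    Tendsto (partialProdNS (n + 1) m μ ω) atTop (nhds (BsplineFT 0 (max m 1) ω * L)) := by
  rw [bsplineFT_eq_dslope_exp_pow, zero_add, pow_one]
  exact ((tendsto_prod_Ico_one_add_exp_div_two _ _).mul hL).congr fun N ↦
    (partialProdNS_succ hn m μ ω N).symm

/-- Convolution property (Theorem 4.1, Fourier form): for `n ≥ 3`,
`Φ^{(n,m)} = B̂^{(0,m)} · Φ^{(n-1,m)}` for `m ≥ 1`, and `Φ^{(n,0)} = B̂^{(0,1)} · Φ^{(n-1,0)}`. -/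
theorem convolution_property (n : ℕ) (hn : 3 ≤ n) (μ : ℝ) (hμ : 1 < μ)
    (Φ Φ' : ℕ → ℝ → ℂ)
    (hΦ : ∀ m : ℕ, ∀ ω : ℝ,
      Tendsto (fun N => partialProdNS n m μ ω N) atTop (nhds (Φ m ω)))
    (hΦ' : ∀ m : ℕ, ∀ ω : ℝ,
      Tendsto (fun N => partialProdNS (n - 1) m μ ω N) atTop (nhds (Φ' m ω))) :
    (∀ m : ℕ, 1 ≤ m → ∀ ω : ℝ, Φ m ω = BsplineFT 0 m ω * Φ' m ω) ∧
    (∀ ω : ℝ, Φ 0 ω = BsplineFT 0 1 ω * Φ' 0 ω) := by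
  obtain ⟨n, rfl⟩ : ∃ p, n = p + 1 := ⟨n - 1, by omega⟩
  have hconv (m : ℕ) (ω : ℝ) : Φ m ω = BsplineFT 0 (max m 1) ω * Φ' m ω :=
    tendsto_nhds_unique (hΦ m ω) (convolution_property_general (by omega) (hΦ' m ω))
  exact ⟨fun m hm ω ↦ by rw [hconv, max_eq_left hm], hconv 0⟩
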